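/- Let G be a finite group with G = AB, where A is a subnormal subgroup of G and B is a supersoluble Hall subgroup of G all of whose Sylow subgroups are cyclic. If every maximal subgroup of every non-cyclic Sylow subgroup of A is 𝔘ₛ-quasinormal in G, then G is supersoluble. -/

import Mathlib

open scoped Pointwise

universe u

/-- `M` is a maximal subgroup of `K` (within the subgroup lattice of the ambient group). -/
def IsMaximalIn {G : Type*} [Group G] (M K : Subgroup G) : Prop :=
  M < K ∧ ∀ L : Subgroup G, M < L → L ≤ K → L = K

/-- `P` is a Sylow `p`-subgroup of the subgroup `E`. -/
def IsSylowIn {G : Type*} [Group G] (p : ℕ) (P E : Subgroup G) : Prop :=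
  P ≤ E ∧ IsPGroup p P ∧ ¬ p ∣ (P.subgroupOf E).index

/-- `H` is s-permutable in `G`: it permutes with every Sylow subgroup of `G`. -/
def SPermutable {G : Type*} [Group G] (H : Subgroup G) : Prop :=
  ∀ q : ℕ, q.Prime → ∀ Q : Subgroup G, IsSylowIn q Q ⊤ →
    (H : Set G) * (Q : Set G) = (Q : Set G) * (H : Set G)

/-- `A/B` is a chief factor of the ambient group. -/
def IsChiefFactor {G : Type*} [Group G] (A B : Subgroup G) : Prop :=
  A.Normal ∧ B.Normal ∧ B < A ∧ ∀ L : Subgroup G, L.Normal → B < L → L < A → False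

/-- The 𝔘-hypercenter: the product of all normal subgroups `N` such that every chief
factor `A/B` with `A ≤ N` has prime order. -/
def UHypercenter (G : Type*) [Group G] : Subgroup G :=
  sSup {N : Subgroup G | N.Normal ∧
    ∀ A B : Subgroup G, IsChiefFactor A B → A ≤ N → (B.relIndex A).Prime}

/-- The 𝔖-hypercenter: the product of all normal subgroups `N` such that every chief
factor `A/B` with `A ≤ N` is abelian with `G/C_G(A/B)` soluble. -/
def SHypercenter (G : Type*) [Group G] : Subgroup G :=
  sSup {N : Subgroup G | N.Normal ∧
    ∀ A B : Subgroup G, IsChiefFactor A B → A ≤ N →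
      (∀ a ∈ A, ∀ b ∈ A, a * b * a⁻¹ * b⁻¹ ∈ B) ∧
      ∃ C : Subgroup G, ∃ _ : C.Normal,
        (∀ g : G, g ∈ C ↔ ∀ h ∈ A, g * h * g⁻¹ * h⁻¹ ∈ B) ∧ IsSolvable (G ⧸ C)}

/-- `H` is 𝔘ₛ-quasinormal in `G`. -/
def UsQuasinormal {G : Type*} [Group G] (H : Subgroup G) : Prop :=
  ∃ T : Subgroup G, T.Normal ∧ SPermutable (H ⊔ T) ∧
    ∀ x ∈ H ⊓ T,
      (QuotientGroup.mk x : G ⧸ H.normalCore) ∈ UHypercenter (G ⧸ H.normalCore)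

/-- `H` is 𝔖ₛ-quasinormal in `G`. -/
def SsQuasinormal {G : Type*} [Group G] (H : Subgroup G) : Prop :=
  ∃ T : Subgroup G, T.Normal ∧ SPermutable (H ⊔ T) ∧
    ∀ x ∈ H ⊓ T,
      (QuotientGroup.mk x : G ⧸ H.normalCore) ∈ SHypercenter (G ⧸ H.normalCore)

/-- A group is supersoluble if it has a chain of subgroups, each normal in the whole
group, reaching from `⊥` to `⊤`, with all successive factors cyclic. -/
def IsSupersoluble (G : Type*) [Group G] : Prop :=
  ∃ (k : ℕ) (c : Fin (k + 1) → Subgroup G),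
    c 0 = ⊥ ∧ c (Fin.last k) = ⊤ ∧ (∀ i, (c i).Normal) ∧
    (∀ i : Fin k, c i.castSucc ≤ c i.succ) ∧
    ∀ i : Fin k, ∃ g ∈ c i.succ, ∀ x ∈ c i.succ, ∃ m : ℤ, x⁻¹ * g ^ m ∈ c i.castSucc

/-- `A` is subnormal in `G`. -/
def IsSubnormal {G : Type*} [Group G] (A : Subgroup G) : Prop :=
  ∃ (n : ℕ) (c : Fin (n + 1) → Subgroup G), c 0 = A ∧ c (Fin.last n) = ⊤ ∧
    ∀ i : Fin n, c i.castSucc ≤ c i.succ ∧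
      ∀ x ∈ c i.succ, ∀ a ∈ c i.castSucc, x * a * x⁻¹ ∈ c i.castSucc

/-- `H` has a supersoluble supplement in the ambient group. -/
def HasSupersolubleSupplement {G : Type*} [Group G] (H : Subgroup G) : Prop :=
  ∃ T : Subgroup G, IsSupersoluble T ∧ (H : Set G) * (T : Set G) = Set.univ

/-- A group is `p`-nilpotent if it has a normal subgroup of order prime to `p`
and of `p`-power index (a normal `p`-complement). -/
def IsPNilpotent (p : ℕ) (G : Type*) [Group G] : Prop :=
  ∃ N : Subgroup G, N.Normal ∧ Nat.Coprime (Nat.card N) p ∧ ∃ k : ℕ, N.index = p ^ k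

/-- `H` has a `p`-nilpotent supplement in the ambient group. -/
def HasPNilpotentSupplement {G : Type*} [Group G] (p : ℕ) (H : Subgroup G) : Prop :=
  ∃ T : Subgroup G, IsPNilpotent p T ∧ (H : Set G) * (T : Set G) = Set.univ

/-- `H` is an `n`-maximal subgroup of `P`: there is a chain
`H = Hₙ < ⋯ < H₁ < H₀ = P` with each term maximal in the preceding one. -/
def IsNMaximalIn {G : Type*} [Group G] (n : ℕ) (H P : Subgroup G) : Prop :=
  ∃ c : Fin (n + 1) → Subgroup G, c 0 = P ∧ c (Fin.last n) = H ∧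
    ∀ i : Fin n, IsMaximalIn (c i.succ) (c i.castSucc)

/-- A group is quasinilpotent if every element induces an inner automorphism
on every chief factor. -/
def IsQuasinilpotentGroup (G : Type*) [Group G] : Prop :=
  ∀ A B : Subgroup G, IsChiefFactor A B →
    ∀ x : G, ∃ y ∈ A, ∀ h ∈ A, (x * h * x⁻¹) * (y * h * y⁻¹)⁻¹ ∈ B

/-- The generalized Fitting subgroup: the product of all normal quasinilpotent
subgroups. -/
def generalizedFitting (G : Type*) [Group G] : Subgroup G :=
  sSup {N : Subgroup G | N.Normal ∧ IsQuasinilpotentGroup N}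

/-- The generalized Fitting subgroup of a subgroup `H`, as a subgroup of `G`. -/
def FStarIn {G : Type*} [Group G] (H : Subgroup G) : Subgroup G :=
  (generalizedFitting H).map H.subtype

/-- The Fitting subgroup: the product of all nilpotent normal subgroups. -/
def fittingSubgroup (G : Type*) [Group G] : Subgroup G :=
  sSup {N : Subgroup G | N.Normal ∧ Group.IsNilpotent N}

/-- The Fitting subgroup of a subgroup `H`, as a subgroup of `G`. -/
def FittingIn {G : Type*} [Group G] (H : Subgroup G) : Subgroup G :=
  (fittingSubgroup H).map H.subtype


namespace UsProof

variable {G : Type*} [Group G]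

lemma relIndex_sup_eq [Finite G] (P T : Subgroup G) [T.Normal] :
    P.relIndex (P ⊔ T) = P.relIndex T := by
  have h1 : Nat.card P * P.relIndex (P ⊔ T) = Nat.card (P ⊔ T : Subgroup G) := by
    rw [← Subgroup.relIndex_bot_left, Subgroup.relIndex_mul_relIndex _ _ _ bot_le le_sup_left,
      Subgroup.relIndex_bot_left]
  have h2 : Nat.card T * T.relIndex P = Nat.card (P ⊔ T : Subgroup G) := by
    rw [← Subgroup.relIndex_sup_right P T, ← Subgroup.relIndex_bot_left,
      Subgroup.relIndex_mul_relIndex _ _ _ bot_le le_sup_right,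
      Subgroup.relIndex_bot_left]
  have h3 : Nat.card (P ⊓ T : Subgroup G) * P.relIndex T = Nat.card T := by
    rw [← Subgroup.inf_relIndex_right P T, ← Subgroup.relIndex_bot_left,
      Subgroup.relIndex_mul_relIndex _ _ _ bot_le inf_le_right, Subgroup.relIndex_bot_left]
  have h4 : Nat.card (P ⊓ T : Subgroup G) * T.relIndex P = Nat.card P := by
    rw [← Subgroup.inf_relIndex_left P T, ← Subgroup.relIndex_bot_left,
      Subgroup.relIndex_mul_relIndex _ _ _ bot_le inf_le_left, Subgroup.relIndex_bot_left]
  have h5 : 0 < Nat.card P := Nat.card_pos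
  apply Nat.eq_of_mul_eq_mul_left h5
  rw [h1, ← h2, ← h3, ← h4]; ring

lemma sylow_relIndex [Finite G] {p : ℕ} [Fact p.Prime] (P : Sylow p G) (T : Subgroup G) [T.Normal] :
    ¬ p ∣ (P : Subgroup G).relIndex T := by
  intro h
  apply P.not_dvd_index
  rw [← relIndex_sup_eq] at h
  exact h.trans (Subgroup.relIndex_dvd_index_of_le le_sup_left)

lemma maximal_coatom {M P : Subgroup G} (h : IsMaximalIn M P) : IsCoatom (M.subgroupOf P) := by
  refine ⟨fun h' => ?_, fun L hL => ?_⟩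
  · rw [Subgroup.subgroupOf_eq_top] at h'
    exact not_le_of_gt h.1 h'
  · have h1 : M < L.map P.subtype := by
      have := (Subgroup.map_lt_map_iff_of_injective (f := P.subtype) P.subtype_injective).2 hL
      rwa [Subgroup.subgroupOf_map_subtype, inf_eq_left.2 h.1.le] at this
    have h2 := h.2 _ h1 (Subgroup.map_subtype_le L)
    rw [eq_top_iff]
    intro x _
    have : (x : G) ∈ L.map P.subtype := by rw [h2]; exact x.2
    obtain ⟨y, hy, hxy⟩ := this
    have : y = x := Subtype.ext hxy
    rwa [← this]

lemma maximal_of_coatom {P : Subgroup G} {L : Subgroup P} (h : IsCoatom L) :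
    IsMaximalIn (L.map P.subtype) P := by
  refine ⟨lt_of_le_of_ne (Subgroup.map_subtype_le L) fun e => h.1 ?_, fun K hK hKP => ?_⟩
  · rw [eq_top_iff]
    intro x _
    have : (x : G) ∈ L.map P.subtype := by rw [e]; exact x.2
    obtain ⟨y, hy, hxy⟩ := this
    have : y = x := Subtype.ext hxy
    rwa [← this]
  · have h1 : L < K.subgroupOf P := by
      rw [← Subgroup.map_lt_map_iff_of_injective (f := P.subtype) P.subtype_injective,
        Subgroup.subgroupOf_map_subtype, inf_eq_left.2 hKP]
      exact hK
    have := h.2 _ h1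
    rw [Subgroup.subgroupOf_eq_top] at this
    exact le_antisymm hKP this

lemma exists_maximal [Finite G] {H P : Subgroup G} (h : H < P) : ∃ M, IsMaximalIn M P ∧ H ≤ M := by
  have h1 : H.subgroupOf P ≠ ⊤ := by
    intro e; rw [Subgroup.subgroupOf_eq_top] at e; exact not_le_of_gt h e
  obtain h2 | ⟨L, hL, hHL⟩ := eq_top_or_exists_le_coatom (H.subgroupOf P)
  · exact absurd h2 h1
  refine ⟨_, maximal_of_coatom hL, ?_⟩
  have := Subgroup.map_mono (f := P.subtype) hHL
  rwa [Subgroup.subgroupOf_map_subtype, inf_eq_left.2 h.le] at this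

lemma maximal_normal [Finite G] {p : ℕ} [Fact p.Prime] {M P : Subgroup G} (hP : IsPGroup p P)
    (h : IsMaximalIn M P) : ∀ x ∈ P, ∀ m ∈ M, x * m * x⁻¹ ∈ M := by
  have := hP.isNilpotent
  have hn := Subgroup.NormalizerCondition.normal_of_coatom _
    (Group.normalizerCondition_of_isNilpotent (G := P)) (maximal_coatom h)
  intro x hx m hm
  have := hn.conj_mem ⟨m, h.1.le hm⟩ (by simpa [Subgroup.mem_subgroupOf] using hm) ⟨x, hx⟩
  simpa [Subgroup.mem_subgroupOf] using this

lemma maximal_relIndex [Finite G] {p : ℕ} [hp : Fact p.Prime] {M P : Subgroup G} (hP : IsPGroup p P)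
    (h : IsMaximalIn M P) : M.relIndex P = p := by
  have hco := maximal_coatom h
  have := hP.isNilpotent
  obtain ⟨a, ha⟩ := IsPGroup.iff_card.1 hP
  obtain ⟨n, hn⟩ := IsPGroup.iff_card.1 (hP.to_subgroup (M.subgroupOf P))
  have hmul := Subgroup.card_mul_index (M.subgroupOf P)
  have hlt : n < a := by
    by_contra hc
    apply hco.1
    apply Subgroup.eq_top_of_le_card
    rw [ha, hn]
    exact Nat.pow_le_pow_right hp.out.pos (by omega)
  obtain ⟨K, hK, hMK⟩ := Sylow.exists_subgroup_card_pow_succ (n := n) (p := p)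
    (by rw [ha]; exact pow_dvd_pow _ hlt) hn
  have hKtop : K = ⊤ := by
    apply hco.2
    refine lt_of_le_of_ne hMK fun e => ?_
    rw [← e, hn] at hK
    have := Nat.pow_right_injective hp.out.two_le hK
    omega
  rw [hKtop, Subgroup.card_top] at hK
  rw [hn, hK, pow_succ] at hmul
  exact Nat.eq_of_mul_eq_mul_left (pow_pos hp.out.pos n) hmul

lemma cyclic_of_maximal_bot [Finite G] {p : ℕ} [hp : Fact p.Prime] {P : Subgroup G}
    (hP : IsPGroup p P) (h : IsMaximalIn ⊥ P) : IsCyclic P := by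
  have := maximal_relIndex hP h
  rw [Subgroup.relIndex_bot_left] at this
  exact isCyclic_of_prime_card this

lemma sylow_isSylowIn [Finite G] {q : ℕ} [Fact q.Prime] (Q : Sylow q G) :
    IsSylowIn q (Q : Subgroup G) ⊤ := by
  refine ⟨le_top, Q.2, ?_⟩
  have : ((Q : Subgroup G).subgroupOf ⊤).index = (Q : Subgroup G).index := by
    simpa [Subgroup.relIndex] using Subgroup.relIndex_top_right (Q : Subgroup G)
  rw [this]
  exact Q.not_dvd_index

/-- product of permuting subgroups -/
def permSub (H Q : Subgroup G) (h : (H : Set G) * (Q : Set G) = (Q : Set G) * (H : Set G)) :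
    Subgroup G where
  carrier := (H : Set G) * (Q : Set G)
  one_mem' := ⟨1, H.one_mem, 1, Q.one_mem, by simp⟩
  mul_mem' := by
    rintro _ _ ⟨a, ha, b, hb, rfl⟩ ⟨c, hc, d, hd, rfl⟩
    have : b * c ∈ (H : Set G) * (Q : Set G) := by rw [h]; exact ⟨b, hb, c, hc, rfl⟩
    obtain ⟨e, he, f, hf, hef⟩ := this
    refine ⟨a * e, H.mul_mem ha he, f * d, Q.mul_mem hf hd, ?_⟩
    simp only at hef ⊢
    calc a * e * (f * d) = a * (e * f) * d := by group
      _ = _ := by rw [hef]; group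
  inv_mem' := by
    rintro _ ⟨a, ha, b, hb, rfl⟩
    rw [h]
    exact ⟨b⁻¹, Q.inv_mem hb, a⁻¹, H.inv_mem ha, by simp⟩

lemma le_of_perm [Finite G] {p : ℕ} [Fact p.Prime] {H : Subgroup G} (hH : IsPGroup p H)
    (Q : Sylow p G)
    (h : (H : Set G) * ((Q : Subgroup G) : Set G) = ((Q : Subgroup G) : Set G) * (H : Set G)) :
    H ≤ Q := by
  have hQ : (Q : Subgroup G) ≤ permSub H Q h := fun x hx => ⟨1, H.one_mem, x, hx, by simp⟩
  have hHK : H ≤ permSub H Q h := fun x hx => ⟨x, hx, 1, Q.one_mem, by simp⟩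
  have hp : IsPGroup p (H.subgroupOf (permSub H Q h)) := hH.comap_subtype
  obtain ⟨S, hS⟩ := hp.exists_le_sylow
  obtain ⟨⟨_, ⟨a, ha, b, hb, rfl⟩⟩, hk⟩ :=
    MulAction.exists_smul_eq (permSub H Q h) (Q.subtype hQ) S
  intro x hx
  have hx' : a * x * a⁻¹ ∈ H := H.mul_mem (H.mul_mem ha hx) (H.inv_mem ha)
  have h1 : (⟨a * x * a⁻¹, hHK hx'⟩ : permSub H Q h) ∈ S := hS (by
    simpa [Subgroup.mem_subgroupOf] using hx')
  rw [← hk, ← SetLike.mem_coe, Sylow.coe_smul, Set.mem_smul_set_iff_inv_smul_mem] at h1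
  have h2 : ((a * b)⁻¹ * (a * x * a⁻¹) * (a * b)) ∈ (Q : Subgroup G) := by
    have h5 := Subgroup.mem_subgroupOf.1 (show _ ∈ (Q : Subgroup G).subgroupOf _ from h1)
    simpa [MulAut.smul_def] using h5
  have h3 := Q.mul_mem (Q.mul_mem hb h2) (Q.inv_mem hb)
  have h4 : b * ((a * b)⁻¹ * (a * x * a⁻¹) * (a * b)) * b⁻¹ = x := by group
  rwa [h4] at h3

lemma index_dvd_of_mul [Finite G] (A B : Subgroup G)
    (h : (A : Set G) * (B : Set G) = Set.univ) : A.index ∣ Nat.card B := by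
  have : MulAction.IsPretransitive B (G ⧸ A) := by
    have key : ∀ x : G ⧸ A, ∃ b : B, b • ((1 : G) : G ⧸ A) = x := by
      intro x
      obtain ⟨g, rfl⟩ := QuotientGroup.mk_surjective x
      have : g⁻¹ ∈ (A : Set G) * (B : Set G) := by rw [h]; trivial
      obtain ⟨a, ha, b, hb, hab⟩ := this
      refine ⟨⟨b⁻¹, B.inv_mem hb⟩, ?_⟩
      change ((b⁻¹ * 1 : G) : G ⧸ A) = (g : G ⧸ A)
      rw [QuotientGroup.eq]
      have : g = b⁻¹ * a⁻¹ := by rw [← inv_inv g, ← hab]; simp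
      rw [this]
      simpa using ha
    refine ⟨fun x y => ?_⟩
    obtain ⟨b, rfl⟩ := key x
    obtain ⟨c, rfl⟩ := key y
    exact ⟨c * b⁻¹, by rw [smul_smul]; simp⟩
  have h1 := MulAction.index_stabilizer_of_transitive B ((1 : G) : G ⧸ A)
  rw [Subgroup.index, ← h1]
  exact Subgroup.index_dvd_card _

/-- s-permutable `p`-subgroups lie in the core of each Sylow `p`-subgroup -/
lemma sperm_le_core [Finite G] {p : ℕ} [hp : Fact p.Prime] {H : Subgroup G} (hH : IsPGroup p H)
    (hs : SPermutable H) (P : Sylow p G) : H ≤ (P : Subgroup G).normalCore := by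
  intro x hx g
  have := le_of_perm hH (g⁻¹ • P) (hs p hp.out _ (sylow_isSylowIn _)) hx
  rw [← SetLike.mem_coe, Sylow.coe_coe, Sylow.coe_smul, Set.mem_smul_set_iff_inv_smul_mem] at this
  have h2 : g * x * g⁻¹ ∈ P := by simpa [MulAut.smul_def] using this
  exact h2

lemma normalizer_top_of_sylow [Finite G] {K : Subgroup G}
    (h : ∀ q : ℕ, q.Prime → ∃ Q : Sylow q G, (Q : Subgroup G) ≤ K) : K = ⊤ := by
  rw [← Subgroup.index_eq_one]
  by_contra hne
  obtain ⟨q, hq, hdvd⟩ := Nat.exists_prime_and_dvd hne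
  have := Fact.mk hq
  obtain ⟨Q, hQ⟩ := h q hq
  exact Q.not_dvd_index (hdvd.trans (Subgroup.index_dvd_of_le hQ))

/-- a maximal subgroup of a Sylow subgroup which is s-permutable is normal -/
lemma sperm_maximal_normal [Finite G] {p : ℕ} [hp : Fact p.Prime] (P : Sylow p G) {M : Subgroup G}
    (hM : IsMaximalIn M P) (hs : SPermutable M) : M.Normal := by
  have hMp : IsPGroup p M := P.2.to_le hM.1.le
  have hO := sperm_le_core hMp hs P
  have hOp : IsPGroup p (P : Subgroup G).normalCore := P.2.to_le (Subgroup.normalCore_le _)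
  let K : Subgroup G := Subgroup.normalizer M
  rw [← Subgroup.normalizer_eq_top_iff]
  apply normalizer_top_of_sylow
  intro q hq
  have := Fact.mk hq
  by_cases hqp : q = p
  · subst hqp
    refine ⟨P, fun x hx => ?_⟩
    rw [Subgroup.mem_normalizer_iff]
    intro m
    refine ⟨fun hm => maximal_normal P.2 hM x hx m hm, fun hm => ?_⟩
    have := maximal_normal P.2 hM x⁻¹ (P.inv_mem hx) _ hm
    simpa [mul_assoc] using this
  · obtain ⟨Q⟩ := (inferInstance : Nonempty (Sylow q G))
    refine ⟨Q, ?_⟩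
    have hperm := hs q hq Q (sylow_isSylowIn Q)
    have key : ∀ x ∈ (Q : Subgroup G), ∀ m ∈ M, x * m * x⁻¹ ∈ M := by
      intro x hx m hm
      have h1 : x * m * x⁻¹ ∈ permSub M Q hperm := by
        have hx' : x ∈ permSub M Q hperm := ⟨1, M.one_mem, x, hx, by simp⟩
        have hm' : m ∈ permSub M Q hperm := ⟨m, hm, 1, Q.one_mem, by simp⟩
        exact mul_mem (mul_mem hx' hm') (inv_mem hx')
      obtain ⟨a, ha, b, hb, hab⟩ := h1
      simp only at hab
      have h2 : x * m * x⁻¹ ∈ (P : Subgroup G).normalCore :=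
        (Subgroup.normalCore_normal _).conj_mem _ (hO hm) x
      have h3 : b ∈ (P : Subgroup G).normalCore := by
        have : b = a⁻¹ * (x * m * x⁻¹) := by rw [← hab]; group
        rw [this]
        exact mul_mem (inv_mem (hO ha)) h2
      have h4 := (IsPGroup.disjoint_of_ne p q (Ne.symm hqp) _ _ hOp Q.2).le_bot ⟨h3, hb⟩
      rw [Subgroup.mem_bot] at h4
      rw [← hab, h4, mul_one]
      exact ha
    intro x hx
    rw [Subgroup.mem_normalizer_iff]
    intro m
    refine ⟨fun hm => key x hx m hm, fun hm => ?_⟩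
    have := key x⁻¹ (Q.inv_mem hx) _ hm
    simpa [mul_assoc] using this

end UsProof

namespace UsProof

variable {G : Type*} [Group G]

/-- in the critical group, chief factors not at the bottom are of prime order -/
lemma chief_prime [Finite G]
    (hb : ∀ K : Subgroup G, K.Normal → K ≠ ⊥ → K ≠ ⊤ →
      ∃ M : Subgroup G, M.Normal ∧ K < M ∧ (K.relIndex M).Prime)
    (D V K : Subgroup G) (_hDn : D.Normal) (hVn : V.Normal) (hKn : K.Normal)
    (hDV : D < V) (hmin : ∀ L : Subgroup G, L.Normal → D ≤ L → L < V → L = D)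
    (hDK : D ≤ K) (hK : K ≠ ⊥) (hVK : ¬ V ≤ K) : (D.relIndex V).Prime := by
  classical
  obtain ⟨E, ⟨hEn, hKE, hVE⟩, hEmax⟩ :=
    (Set.toFinite {E : Subgroup G | E.Normal ∧ K ≤ E ∧ ¬ V ≤ E}).exists_maximal
      ⟨K, hKn, le_rfl, hVK⟩
  have hE0 : E ≠ ⊥ := fun e => hK (le_bot_iff.1 (e ▸ hKE))
  have hE1 : E ≠ ⊤ := fun e => hVE (e ▸ le_top)
  obtain ⟨M, hMn, hEM, hpr⟩ := hb E hEn hE0 hE1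
  have hVM : V ≤ M := by
    by_contra hc
    exact not_le_of_gt hEM (hEmax ⟨hMn, hKE.trans hEM.le, hc⟩ hEM.le)
  have hVED : E ⊓ V = D := by
    apply hmin _ inferInstance (le_inf (hDK.trans hKE) hDV.le)
    exact lt_of_le_of_ne inf_le_right fun e => hVE (inf_eq_right.1 e)
  rw [← hVED, Subgroup.inf_relIndex_right]
  have hd : E.relIndex V ∣ E.relIndex M := by
    rw [← Subgroup.relIndex_sup_right V E,
      ← Subgroup.relIndex_mul_relIndex E (V ⊔ E) M le_sup_right (sup_le hVM hEM.le)]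
    exact dvd_mul_right _ _
  rcases (Nat.dvd_prime hpr).1 hd with h | h
  · exact absurd (Subgroup.relIndex_eq_one.1 h) hVE
  · rwa [h]

/-- normal subgroups of a cyclic normal subgroup -/
lemma normal_of_le_cyclic {Z H : Subgroup G} (hZ : Z.Normal) (hc : IsCyclic Z) (hH : H ≤ Z) :
    H.Normal := by
  obtain ⟨⟨z, hz⟩, hgen⟩ := hc.exists_generator
  have gen : ∀ x ∈ Z, ∃ k : ℤ, z ^ k = x := by
    intro x hx
    obtain ⟨k, hk⟩ := hgen ⟨x, hx⟩
    exact ⟨k, by simpa using congrArg Subtype.val hk⟩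
  refine ⟨fun x hx g => ?_⟩
  obtain ⟨k, hk⟩ := gen x (hH hx)
  obtain ⟨j, hj⟩ := gen (g * z * g⁻¹) (hZ.conj_mem z hz g)
  have : g * x * g⁻¹ = x ^ j := by
    rw [← hk, ← conj_zpow, ← hj, ← zpow_mul, ← zpow_mul, mul_comm]
  rw [this]
  exact H.zpow_mem hx j

lemma no_cyclic [Finite G] (ha : ∀ Z : Subgroup G, Z.Normal → ¬ (Nat.card Z).Prime)
    {Z : Subgroup G} (hZ : Z.Normal) (hc : IsCyclic Z) : Z = ⊥ := by
  by_contra hne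
  have h1 : Nat.card Z ≠ 1 := by rwa [Ne, Subgroup.card_eq_one]
  obtain ⟨p, hp, hdvd⟩ := Nat.exists_prime_and_dvd h1
  have := Fact.mk hp
  obtain ⟨x, hx⟩ := exists_prime_orderOf_dvd_card' p hdvd
  have hle : Subgroup.zpowers (x : G) ≤ Z := by
    rw [Subgroup.zpowers_le]; exact x.2
  apply ha _ (normal_of_le_cyclic hZ hc hle)
  rw [Nat.card_zpowers, Subgroup.orderOf_coe, hx]
  exact hp

lemma exists_min_normal [Finite G] {D X : Subgroup G} (hX : X.Normal) (h : D < X) :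
    ∃ V : Subgroup G, V.Normal ∧ D < V ∧ V ≤ X ∧
      ∀ L : Subgroup G, L.Normal → D ≤ L → L < V → L = D := by
  obtain ⟨V, ⟨hVn, hDV, hVX⟩, hVmin⟩ :=
    (Set.toFinite {V : Subgroup G | V.Normal ∧ D < V ∧ V ≤ X}).exists_minimal
      ⟨X, hX, h, le_rfl⟩
  refine ⟨V, hVn, hDV, hVX, fun L hL hDL hLV => ?_⟩
  by_contra hne
  exact not_le_of_gt hLV (hVmin ⟨hL, lt_of_le_of_ne hDL (Ne.symm hne), hLV.le.trans hVX⟩ hLV.le)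

lemma normal_map_of_char {N : Subgroup G} (hN : N.Normal) (K : Subgroup N) [K.Characteristic] :
    (K.map N.subtype).Normal := by
  infer_instance

/-- the hypothesis on Sylow subgroups of the critical group -/
def Good (G : Type*) [Group G] : Prop :=
  ∀ p : ℕ, p.Prime → ∃ P : Sylow p G, IsCyclic (P : Subgroup G) ∨
    ∀ M : Subgroup G, IsMaximalIn M P → M.normalCore = ⊥ →
      ∃ T : Subgroup G, T.Normal ∧ SPermutable (M ⊔ T) ∧ M ⊓ T = ⊥

lemma card_le_of_disjoint [Finite G] {p : ℕ} [Fact p.Prime] {M P X : Subgroup G}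
    (hP : IsPGroup p P) (hM : IsMaximalIn M P) (hX : X ≤ P) (h : M ⊓ X = ⊥) :
    Nat.card X = 1 ∨ Nat.card X = p := by
  have h1 : M.relIndex X = Nat.card X := by
    rw [← Subgroup.inf_relIndex_right, h, Subgroup.relIndex_bot_left]
  have h2 := Subgroup.relIndex_le_of_le_right (H := M) hX (Nat.pos_iff_ne_zero.1 (by
    rw [maximal_relIndex hP hM]; exact (Fact.out : p.Prime).pos))
  rw [h1, maximal_relIndex hP hM] at h2
  rcases (hP.to_le hX).card_eq_or_dvd with h | h
  · exact Or.inl h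
  · exact Or.inr (le_antisymm h2 (Nat.le_of_dvd Nat.card_pos h))

/-- Step 1: the minimal normal subgroup is a `p`-group -/
lemma step1 [Finite G] (ha : ∀ Z : Subgroup G, Z.Normal → ¬ (Nat.card Z).Prime)
    (hc : Good G) (N : Subgroup G) (hNn : N.Normal) (hN0 : N ≠ ⊥)
    (huniq : ∀ K : Subgroup G, K.Normal → K ≠ ⊥ → N ≤ K) :
    ∃ p : ℕ, p.Prime ∧ IsPGroup p N := by
  classical
  by_contra hcon
  push Not at hcon
  have hcore : ∀ p : ℕ, p.Prime → ∀ K : Subgroup G, K.Normal → IsPGroup p K → K = ⊥ := by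
    intro p hp K hK hKp
    by_contra hne
    exact hcon p hp (hKp.to_le (huniq K hK hne))
  have hZ : IsZGroup N := by
    refine ⟨fun p hp Q => ?_⟩
    have := Fact.mk hp
    obtain ⟨P, hP⟩ := hc p hp
    have hcyc : IsCyclic ((P : Subgroup G) ⊓ N : Subgroup G) := by
      by_cases hPc : IsCyclic (P : Subgroup G)
      · exact Subgroup.isCyclic_of_le (inf_le_left : (P : Subgroup G) ⊓ N ≤ P)
      have hP' := hP.resolve_left hPc
      have hP0 : ⊥ < (P : Subgroup G) := by
        rw [bot_lt_iff_ne_bot]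
        intro e
        apply hPc
        rw [e]; infer_instance
      obtain ⟨M, hM, -⟩ := exists_maximal hP0
      have hMp : IsPGroup p M := P.2.to_le hM.1.le
      obtain ⟨T, hTn, hs, hMT⟩ := hP' M hM
        (hcore p hp _ inferInstance (hMp.to_le (Subgroup.normalCore_le _)))
      by_cases hT : T = ⊥
      · subst hT
        rw [sup_bot_eq] at hs
        have h1 := sperm_le_core hMp hs P
        rw [hcore p hp _ inferInstance (P.2.to_le (Subgroup.normalCore_le _)), le_bot_iff] at h1
        subst h1
        exact absurd (cyclic_of_maximal_bot P.2 hM) hPc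
      · have hNT := huniq T hTn hT
        have hd : M ⊓ ((P : Subgroup G) ⊓ N) = ⊥ := by
          rw [eq_bot_iff, ← hMT]
          exact inf_le_inf_left _ (inf_le_right.trans hNT)
        rcases card_le_of_disjoint P.2 hM inf_le_left hd with h | h
        · rw [Subgroup.card_eq_one] at h
          rw [h]; infer_instance
        · exact isCyclic_of_prime_card h
    have hSp : IsPGroup p ((P : Subgroup G).subgroupOf N) := P.2.comap_subtype
    let S : Sylow p N := hSp.toSylow (sylow_relIndex P N)
    have hS : IsCyclic S := by
      have e : ((P : Subgroup G) ⊓ N).subgroupOf N = (S : Subgroup N) := by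
        rw [Subgroup.inf_subgroupOf_right]; rfl
      have e2 := (Subgroup.subgroupOfEquivOfLe (inf_le_right : (P : Subgroup G) ⊓ N ≤ N))
      have : IsCyclic (((P : Subgroup G) ⊓ N).subgroupOf N) :=
        isCyclic_of_surjective e2.symm e2.symm.surjective
      rw [e] at this
      exact this
    exact isCyclic_of_surjective (S.equiv Q) (S.equiv Q).surjective
  have hNnt : Nontrivial N := (Subgroup.nontrivial_iff_ne_bot N).2 hN0
  have hlt := IsZGroup.commutator_lt (G := N)
  have hcomm : commutator N = ⊥ := by
    by_contra hne
    have h1 := huniq ((commutator N).map N.subtype) inferInstance (by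
      rwa [Ne, Subgroup.map_eq_bot_iff_of_injective _ N.subtype_injective])
    apply hlt.ne
    rw [eq_top_iff]
    intro x _
    obtain ⟨y, hy, hxy⟩ := h1 x.2
    have : y = x := Subtype.ext hxy
    rwa [← this]
  have hab : ∀ a b : N, a * b = b * a := by
    intro a b
    have h1 := (commutator_eq_bot_iff_center_eq_top N).1 hcomm
    have h2 : b ∈ Subgroup.center N := by rw [h1]; trivial
    exact Subgroup.mem_center_iff.1 h2 a
  have : IsCyclic N := by
    let _ : CommGroup N := { (inferInstance : Group N) with mul_comm := hab }
    infer_instance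
  exact hN0 (no_cyclic ha hNn this)

/-- Step 2: all maximal subgroups of the Sylow subgroup contain `N` -/
lemma step2 [Finite G] (ha : ∀ Z : Subgroup G, Z.Normal → ¬ (Nat.card Z).Prime)
    (hc : Good G) (N : Subgroup G) (hNn : N.Normal) (hN0 : N ≠ ⊥)
    (huniq : ∀ K : Subgroup G, K.Normal → K ≠ ⊥ → N ≤ K)
    (p : ℕ) [hp : Fact p.Prime] (hNp : IsPGroup p N) :
    ∃ P : Sylow p G, ∀ M : Subgroup G, IsMaximalIn M P → N ≤ M := by
  obtain ⟨P, hP⟩ := hc p hp.out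
  have hNP : N ≤ P := hNp.le_sylow_of_normal P
  refine ⟨P, fun M hM => ?_⟩
  have hPc : ¬ IsCyclic (P : Subgroup G) := fun h => hN0 (no_cyclic ha hNn
    (Subgroup.isCyclic_of_le hNP))
  by_contra hNM
  have hcore : M.normalCore = ⊥ := by
    by_contra hne
    exact hNM ((huniq _ inferInstance hne).trans (Subgroup.normalCore_le _))
  obtain ⟨T, hTn, hs, hMT⟩ := hP.resolve_left hPc M hM hcore
  by_cases hT : T = ⊥
  · subst hT
    rw [sup_bot_eq] at hs
    have h1 := sperm_maximal_normal P hM hs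
    rw [Subgroup.normalCore_eq_self] at hcore
    subst hcore
    exact hPc (cyclic_of_maximal_bot P.2 hM)
  · have hNT := huniq T hTn hT
    have hd : M ⊓ N = ⊥ := by
      rw [eq_bot_iff, ← hMT]
      exact inf_le_inf_left _ hNT
    rcases card_le_of_disjoint P.2 hM hNP hd with h | h
    · exact hN0 (Subgroup.card_eq_one.1 h)
    · exact ha N hNn (by rw [h]; exact hp.out)

end UsProof

namespace UsProof

variable {G : Type*} [Group G]

lemma factor_ker [Finite G] {p : ℕ} [hp : Fact p.Prime] (A B : Subgroup G) (hA : A.Normal)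
    (hB : B.Normal) (h : B.relIndex A = p) :
    ∃ K : Subgroup G, K.Normal ∧ (∀ x y : G, x * y * x⁻¹ * y⁻¹ ∈ K) ∧ (∀ x : G, x ^ (p - 1) ∈ K) ∧
      ∀ x ∈ K, ∀ a ∈ A, x * a * x⁻¹ * a⁻¹ ∈ B := by
  let A' := A.map (QuotientGroup.mk' B)
  have hA' : A'.Normal := Subgroup.Normal.map hA _ (QuotientGroup.mk'_surjective B)
  have hcard : Nat.card A' = p := by
    rw [← h, ← Subgroup.relIndex_ker, QuotientGroup.ker_mk']
  have hcyc : IsCyclic A' := isCyclic_of_prime_card hcard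
  let f : G →* (ZMod (Nat.card A'))ˣ :=
    ((IsCyclic.mulAutMulEquiv A').toMonoidHom.comp (MulAut.conjNormal (H := A'))).comp
      (QuotientGroup.mk' B)
  refine ⟨f.ker, inferInstance, fun x y => ?_, fun x => ?_, fun x hx a ha => ?_⟩
  · rw [MonoidHom.mem_ker]
    simp only [map_mul, map_inv]
    rw [mul_comm (f x)]; group
  · rw [MonoidHom.mem_ker, map_pow]
    have : Nat.card (ZMod (Nat.card A'))ˣ = p - 1 := by
      rw [hcard, Nat.card_eq_fintype_card, ZMod.card_units]
    rw [← this]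
    exact pow_card_eq_one'
  · rw [MonoidHom.mem_ker] at hx
    have h1 : MulAut.conjNormal (H := A') (QuotientGroup.mk' B x) = 1 := by
      apply (IsCyclic.mulAutMulEquiv A').injective
      rw [map_one]; exact hx
    have h2 := congrArg (fun e => ((e ⟨QuotientGroup.mk' B a, Subgroup.mem_map_of_mem _ ha⟩ : A') : G ⧸ B)) h1
    simp only [MulAut.conjNormal_apply, MulAut.one_apply] at h2
    rw [← QuotientGroup.eq_one_iff]
    rw [mul_inv_eq_iff_eq_mul] at h2
    have h3 : ((x * a * x⁻¹ * a⁻¹ : G) : G ⧸ B) = (QuotientGroup.mk' B x) * (QuotientGroup.mk' B a) * (QuotientGroup.mk' B x)⁻¹ * (QuotientGroup.mk' B a)⁻¹ := rfl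
    rw [h3, h2]; group

/-- coprime fixed points in cosets -/
lemma fixed_in_coset [Finite G] {p r : ℕ} [hp : Fact p.Prime] [hr : Fact r.Prime] (hne : r ≠ p)
    (R B : Subgroup G) (hR : IsPGroup r R) (hB : B.Normal) (hBp : IsPGroup p B) (a : G)
    (h : ∀ x ∈ R, x * a * x⁻¹ * a⁻¹ ∈ B) :
    ∃ b ∈ B, b * a ∈ Subgroup.centralizer (R : Set G) := by
  have hstab : ∀ x ∈ R, ∀ b ∈ B, x * (b * a) * x⁻¹ * a⁻¹ ∈ B := by
    intro x hx b hb
    have : x * (b * a) * x⁻¹ * a⁻¹ = (x * b * x⁻¹) * (x * a * x⁻¹ * a⁻¹) := by group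
    rw [this]
    exact B.mul_mem (hB.conj_mem b hb x) (h x hx)
  let act : MulAction R B :=
    { smul := fun x b => ⟨x * (b * a) * x⁻¹ * a⁻¹, hstab x x.2 b b.2⟩
      one_smul := fun b => Subtype.ext (by
        change (1 : G) * (b * a) * (1 : G)⁻¹ * a⁻¹ = b
        group)
      mul_smul := fun x y b => Subtype.ext (by
        change ((x : G) * y) * (b * a) * ((x : G) * y)⁻¹ * a⁻¹ =
          x * ((y * (b * a) * (y : G)⁻¹ * a⁻¹) * a) * (x : G)⁻¹ * a⁻¹
        group) }
  have hnd : ¬ r ∣ Nat.card B := by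
    obtain ⟨n, hn⟩ := IsPGroup.iff_card.1 hBp
    rw [hn]
    intro hd
    exact hne ((Nat.prime_dvd_prime_iff_eq hr.out hp.out).1 (hr.out.dvd_of_dvd_pow hd))
  obtain ⟨b, hb⟩ := hR.nonempty_fixed_point_of_prime_not_dvd_card B hnd
  refine ⟨b, b.2, ?_⟩
  rw [Subgroup.mem_centralizer_iff]
  intro x hx
  have h1 : (x * (b * a) * x⁻¹ * a⁻¹ : G) = b := congrArg Subtype.val (hb ⟨x, hx⟩)
  calc x * (b * a) = (x * (b * a) * x⁻¹ * a⁻¹) * a * x := by group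
    _ = _ := by rw [h1]

lemma step3_cent [Finite G]
    (hb : ∀ K : Subgroup G, K.Normal → K ≠ ⊥ → K ≠ ⊤ →
      ∃ M : Subgroup G, M.Normal ∧ K < M ∧ (K.relIndex M).Prime)
    (N : Subgroup G) (hNn : N.Normal) (hN0 : N ≠ ⊥)
    {p r : ℕ} [hp : Fact p.Prime] [hr : Fact r.Prime] (hne : r ≠ p)
    (R C : Subgroup G) (hR : IsPGroup r R) (hRC : R ≤ C)
    (hC : ∀ K : Subgroup G, K.Normal → (∀ x y : G, x * y * x⁻¹ * y⁻¹ ∈ K) →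
      (∀ x : G, x ^ (p - 1) ∈ K) → C ≤ K) :
    ∀ n : ℕ, ∀ A : Subgroup G, Nat.card A = n → A.Normal → IsPGroup p A → N ≤ A →
      A ≤ N ⊔ Subgroup.centralizer (R : Set G) := by
  intro n
  induction n using Nat.strong_induction_on with
  | _ n ih =>
  intro A hAn hA hAp hNA
  rcases eq_or_lt_of_le hNA with e | hlt
  · rw [← e]; exact le_sup_left
  obtain ⟨B, ⟨hBn, hNB, hBA⟩, hBmax⟩ :=
    (Set.toFinite {B : Subgroup G | B.Normal ∧ N ≤ B ∧ B < A}).exists_maximal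
      ⟨N, hNn, le_rfl, hlt⟩
  have hpr : (B.relIndex A).Prime := by
    refine chief_prime hb B A B hBn hA hBn hBA (fun L hL hBL hLA => ?_) le_rfl
      (fun e => hN0 (le_bot_iff.1 (e ▸ hNB))) (not_le_of_gt hBA)
    exact le_antisymm (hBmax ⟨hL, hNB.trans hBL, hLA⟩ hBL) hBL
  have hidx : B.relIndex A = p := by
    obtain ⟨k, hk⟩ := IsPGroup.iff_card.1 hAp
    have h1 := Subgroup.relIndex_dvd_card B A
    rw [hk] at h1
    exact (Nat.prime_dvd_prime_iff_eq hpr hp.out).1 (hpr.dvd_of_dvd_pow h1)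
  have hBcard : Nat.card B < n := by
    rw [← hAn]
    by_contra hc
    exact hBA.ne (Subgroup.eq_of_le_of_card_ge hBA.le (not_lt.1 hc))
  have hB := ih _ hBcard B rfl hBn (hAp.to_le hBA.le) hNB
  obtain ⟨K, hK, hK1, hK2, hK3⟩ := factor_ker A B hA hBn hidx
  intro a haA
  obtain ⟨b, hbB, hba⟩ := fixed_in_coset hne R B hR hBn (hAp.to_le hBA.le) a
    (fun x hx => hK3 x (hC K hK hK1 hK2 (hRC hx)) a haA)
  have : a = b⁻¹ * (b * a) := by group
  rw [this]
  exact mul_mem (inv_mem (hB hbB)) ((le_sup_right : _ ≤ N ⊔ _) hba)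

lemma step3 [Finite G]
    (hb : ∀ K : Subgroup G, K.Normal → K ≠ ⊥ → K ≠ ⊤ →
      ∃ M : Subgroup G, M.Normal ∧ K < M ∧ (K.relIndex M).Prime)
    (N : Subgroup G) (hNn : N.Normal) (hN0 : N ≠ ⊥)
    (huniq : ∀ K : Subgroup G, K.Normal → K ≠ ⊥ → N ≤ K)
    (p : ℕ) [hp : Fact p.Prime] (hNp : IsPGroup p N) (P : Sylow p G)
    (hP : ∀ M : Subgroup G, IsMaximalIn M P → N ≤ M) :
    ∃ O : Subgroup G, O.Normal ∧ IsPGroup p O ∧ N ≤ O ∧ (∀ x y : G, x * y * x⁻¹ * y⁻¹ ∈ O) ∧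
      (∀ x : G, x ^ (p - 1) ∈ O) := by
  classical
  have hNP : N ≤ P := hNp.le_sylow_of_normal P
  let O := (P : Subgroup G).normalCore
  have hOn : O.Normal := Subgroup.normalCore_normal _
  have hOp : IsPGroup p O := P.2.to_le (Subgroup.normalCore_le _)
  have hNO : N ≤ O := Subgroup.normal_le_normalCore.2 hNP
  have hO0 : O ≠ ⊥ := fun e => hN0 (le_bot_iff.1 (e ▸ hNO))
  let S : Set (Subgroup G) := {K | K.Normal ∧ (∀ x y : G, x * y * x⁻¹ * y⁻¹ ∈ K) ∧
    (∀ x : G, x ^ (p - 1) ∈ K)}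
  let C := sInf S
  have hCle : ∀ K : Subgroup G, K.Normal → (∀ x y : G, x * y * x⁻¹ * y⁻¹ ∈ K) →
      (∀ x : G, x ^ (p - 1) ∈ K) → C ≤ K := fun K h1 h2 h3 => sInf_le ⟨h1, h2, h3⟩
  have hC1 : ∀ x y : G, x * y * x⁻¹ * y⁻¹ ∈ C := fun x y =>
    Subgroup.mem_sInf.2 fun K hK => hK.2.1 x y
  have hC2 : ∀ x : G, x ^ (p - 1) ∈ C := fun x =>
    Subgroup.mem_sInf.2 fun K hK => hK.2.2 x
  have hCn : C.Normal := ⟨fun n hn g => Subgroup.mem_sInf.2 fun K hK =>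
    hK.1.conj_mem n (Subgroup.mem_sInf.1 hn K hK) g⟩
  refine ⟨O, hOn, hOp, hNO, ?_⟩
  suffices hCO : C ≤ O from ⟨fun x y => hCO (hC1 x y), fun x => hCO (hC2 x)⟩
  by_contra hCO
  have hPC : (P : Subgroup G) ≤ C := by
    intro x hx
    obtain ⟨k, hk⟩ := (IsPGroup.iff_orderOf.1 P.2) ⟨x, hx⟩
    rw [Subgroup.orderOf_mk] at hk
    have hcop : (p - 1).Coprime (orderOf x) := by
      rw [hk]
      apply Nat.Coprime.pow_right
      rw [Nat.coprime_comm]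
      refine (Nat.Prime.coprime_iff_not_dvd hp.out).2 fun hd => ?_
      have := Nat.le_of_dvd (Nat.sub_pos_of_lt hp.out.one_lt) hd
      have := hp.out.pos
      omega
    obtain ⟨m, hm⟩ := exists_pow_eq_self_of_coprime hcop
    rw [← hm]
    exact C.pow_mem (hC2 x) m
  have hOC : O < C := lt_of_le_not_ge ((Subgroup.normalCore_le _).trans hPC) hCO
  obtain ⟨V, hVn, hOV, hVC, hVmin⟩ := exists_min_normal hCn hOC
  have hpr := chief_prime hb O V O hOn hVn hOn hOV hVmin le_rfl hO0 (not_le_of_gt hOV)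
  set r := O.relIndex V with hr
  have hrf : Fact r.Prime := ⟨hpr⟩
  have hcardV : Nat.card O * r = Nat.card V := by
    rw [hr, ← Subgroup.relIndex_bot_left, Subgroup.relIndex_mul_relIndex _ _ _ bot_le hOV.le,
      Subgroup.relIndex_bot_left]
  obtain ⟨k, hk⟩ := IsPGroup.iff_card.1 hOp
  have hrp : r ≠ p := by
    intro e
    have hVp : IsPGroup p V := by
      apply IsPGroup.of_card (n := k + 1)
      rw [← hcardV, hk, e, pow_succ]
    exact not_le_of_gt hOV (Subgroup.normal_le_normalCore.2 (hVp.le_sylow_of_normal P))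
  obtain ⟨R₀⟩ := (inferInstance : Nonempty (Sylow r V))
  have hfrat := Sylow.normalizer_sup_eq_top R₀
  set R := (R₀ : Subgroup V).map V.subtype with hRdef
  have hRr : IsPGroup r R := R₀.2.map _
  have hRV : R ≤ V := Subgroup.map_subtype_le _
  have hR0 : R ≠ ⊥ := by
    rw [hRdef, Ne, Subgroup.map_eq_bot_iff_of_injective _ V.subtype_injective]
    exact R₀.ne_bot_of_dvd_card (by rw [← hcardV]; exact dvd_mul_left _ _)
  have hRO : ¬ R ≤ O := by
    intro h
    have := IsPGroup.disjoint_of_ne r p hrp _ _ hRr hOp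
    exact hR0 (le_bot_iff.1 (this le_rfl h))
  have hVRO : V ≤ R ⊔ O := by
    have h1 : O.relIndex R ∣ r := by
      rw [← Subgroup.relIndex_sup_right R O, hr,
        ← Subgroup.relIndex_mul_relIndex O (R ⊔ O) V le_sup_right (sup_le hRV hOV.le)]
      exact dvd_mul_right _ _
    have h2 := (Nat.dvd_prime hpr).1 h1
    rw [Subgroup.relIndex_eq_one] at h2
    have h3 := h2.resolve_left hRO
    rw [← Subgroup.relIndex_sup_right R O] at h3
    have h4 := Subgroup.relIndex_mul_relIndex O (R ⊔ O) V le_sup_right (sup_le hRV hOV.le)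
    rw [h3, ← hr] at h4
    rw [← Subgroup.relIndex_eq_one]
    exact Nat.eq_of_mul_eq_mul_left hpr.pos (by rw [h4, mul_one])
  have hcent := step3_cent hb N hNn hN0 hrp R C hRr (hRV.trans hVC) hCle _ O rfl hOn hOp hNO
  have hcn : Subgroup.centralizer (R : Set G) ≤ Subgroup.normalizer (R : Set G) :=
    Subgroup.centralizer_le_normalizer _
  have htop : Subgroup.normalizer (R : Set G) ⊔ N = ⊤ := by
    rw [eq_top_iff, ← hfrat]
    refine sup_le le_sup_left (hVRO.trans (sup_le (Subgroup.le_normalizer.trans le_sup_left) ?_))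
    exact hcent.trans (sup_le le_sup_right (hcn.trans le_sup_left))
  have hPR : (P : Subgroup G) ≤ Subgroup.normalizer (R : Set G) := by
    by_contra hc
    have hlt : (P : Subgroup G) ⊓ Subgroup.normalizer (R : Set G) < P :=
      lt_of_le_of_ne inf_le_left fun e => hc (inf_eq_left.1 e)
    obtain ⟨M, hM, hle⟩ := exists_maximal hlt
    apply not_le_of_gt hM.1
    intro x hx
    have hx' : x ∈ Subgroup.normalizer (R : Set G) ⊔ N := by rw [htop]; trivial
    obtain ⟨y, hy, n, hn, rfl⟩ := Subgroup.mem_sup_of_normal_right.1 hx'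
    have hyP : y ∈ (P : Subgroup G) := by
      have : y = y * n * n⁻¹ := by group
      rw [this]
      exact mul_mem hx (inv_mem (hNP hn))
    exact mul_mem (hle ⟨hyP, hy⟩) (hP M hM hn)
  rw [sup_eq_left.2 (hNP.trans hPR), Subgroup.normalizer_eq_top_iff] at htop
  have hNR := huniq R htop hR0
  have := IsPGroup.disjoint_of_ne r p hrp _ _ hRr hNp
  exact hN0 (le_bot_iff.1 (this hNR le_rfl))

end UsProof

namespace UsProof

variable {G : Type*} [Group G]

open Polynomial in
lemma eig {p : ℕ} [hp : Fact p.Prime] {W : Type*} [AddCommGroup W] [Module (ZMod p) W] [Finite W]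
    [Nontrivial W] (f : Module.End (ZMod p) W) (hf' : ∀ x, (⇑f)^[p] x = f x) :
    ∃ c : ZMod p, ∃ v : W, v ≠ 0 ∧ f v = c • v := by
  have hf : f ^ p = f := LinearMap.ext fun x => by rw [Module.End.pow_apply]; exact hf' x
  have h0 : (aeval f) (X ^ p - X : (ZMod p)[X]) = 0 := by simp [hf]
  have hfd : Module.Finite (ZMod p) W := Module.Finite.of_finite
  have hd : minpoly (ZMod p) f ∣ X ^ p - X := minpoly.dvd _ _ h0
  have hs : (X ^ p - X : (ZMod p)[X]).Splits := by
    have := FiniteField.splits_X_pow_card_sub_X (K := ZMod p) (p := p)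
    simpa using this
  have hne : (X ^ p - X : (ZMod p)[X]) ≠ 0 := FiniteField.X_pow_card_sub_X_ne_zero _ hp.out.one_lt
  have hs' : (minpoly (ZMod p) f).Splits := hs.of_dvd hne hd
  obtain ⟨c, hc⟩ := hs'.exists_eval_eq_zero
    (minpoly.degree_pos (Algebra.IsIntegral.isIntegral f)).ne'
  have he : f.HasEigenvalue c := Module.End.hasEigenvalue_of_isRoot hc
  obtain ⟨v, hv⟩ := he.exists_hasEigenvector
  exact ⟨c, v, hv.2, hv.apply_eq_smul⟩

lemma eig_group {p : ℕ} [hp : Fact p.Prime] {W : Type*} [CommGroup W] [Finite W]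
    [Nontrivial W] (hW : ∀ x : W, x ^ p = 1) (f : W →* W) (hf : ∀ x, f^[p] x = f x) :
    ∃ k : ℕ, ∃ v : W, v ≠ 1 ∧ f v = v ^ k := by
  letI : Module (ZMod p) (Additive W) := AddCommGroup.zmodModule (fun x => hW x)
  let F : Module.End (ZMod p) (Additive W) := (MonoidHom.toAdditive f).toZModLinearMap p
  obtain ⟨c, v, hv, h⟩ := eig F (fun x => hf x)
  refine ⟨c.val, v.toMul, fun e => hv e, ?_⟩
  have h1 : c • v = c.val • v := by
    rw [← Nat.cast_smul_eq_nsmul (ZMod p), ZMod.natCast_zmod_val]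
  rw [h1] at h
  exact h

lemma step4 [Finite G] (ha : ∀ Z : Subgroup G, Z.Normal → ¬ (Nat.card Z).Prime)
    (N : Subgroup G) (hNn : N.Normal) (hN0 : N ≠ ⊥)
    (huniq : ∀ K : Subgroup G, K.Normal → K ≠ ⊥ → N ≤ K)
    (p : ℕ) [hp : Fact p.Prime] (hNp : IsPGroup p N)
    (O : Subgroup G) (hO : O.Normal) (hOp : IsPGroup p O) (hNO : N ≤ O)
    (h1 : ∀ x y : G, x * y * x⁻¹ * y⁻¹ ∈ O)
    (h2 : ∀ x : G, x ^ (p - 1) ∈ O) : False := by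
  have hNnt : Nontrivial N := (Subgroup.nontrivial_iff_ne_bot N).2 hN0
  have hpN : p ∣ Nat.card N := by
    rcases hNp.card_eq_or_dvd with h | h
    · exact absurd (Subgroup.card_eq_one.1 h) hN0
    · exact h
  have hcent : ∀ x ∈ O, ∀ n ∈ N, x * n * x⁻¹ = n := by
    let act : MulAction O N := MulAction.compHom N
      ((MulAut.conjNormal (H := N)).comp O.subtype)
    have hsm : ∀ (x : O) (n : N), ((x • n : N) : G) = x * n * (x : G)⁻¹ := fun x n => rfl
    obtain ⟨b, hb, hb1⟩ := hOp.exists_fixed_point_of_prime_dvd_card_of_fixed_point N hpN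
      (a := 1) (by intro x; apply Subtype.ext; rw [hsm]; simp)
    have hle := huniq (N ⊓ Subgroup.centralizer (O : Set G)) inferInstance (by
      intro e
      have : (b : G) ∈ N ⊓ Subgroup.centralizer (O : Set G) := by
        refine Subgroup.mem_inf.2 ⟨b.2, ?_⟩
        rw [Subgroup.mem_centralizer_iff]
        intro x hx
        have := hsm ⟨x, hx⟩ b
        rw [hb ⟨x, hx⟩] at this
        simp only at this
        rw [eq_mul_inv_iff_mul_eq] at this
        exact this.symm
      rw [e, Subgroup.mem_bot] at this
      exact hb1 (Subtype.ext this.symm))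
    intro x hx n hn
    have := Subgroup.mem_centralizer_iff.1 (hle hn).2 x hx
    rw [this]; group
  have hcomm : ∀ a ∈ N, ∀ b ∈ N, a * b = b * a := by
    intro a ha b hb
    have := hcent a (hNO ha) b hb
    rwa [mul_inv_eq_iff_eq_mul] at this
  obtain ⟨z, hz⟩ := exists_prime_orderOf_dvd_card' p hpN
  have hexp : ∀ n ∈ N, n ^ p = 1 := by
    let Ω : Subgroup G :=
      { carrier := {n | n ∈ N ∧ n ^ p = 1}
        one_mem' := ⟨N.one_mem, one_pow _⟩
        mul_mem' := by
          rintro a b ⟨ha, ha'⟩ ⟨hb, hb'⟩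
          refine ⟨N.mul_mem ha hb, ?_⟩
          rw [(show Commute a b from hcomm a ha b hb).mul_pow, ha', hb', one_mul]
        inv_mem' := by
          rintro a ⟨ha, ha'⟩
          exact ⟨N.inv_mem ha, by rw [inv_pow, ha', inv_one]⟩ }
    have hΩ : Ω.Normal := ⟨fun n hn g => ⟨hNn.conj_mem n hn.1 g, by
      rw [conj_pow, hn.2]; simp⟩⟩
    have hle := huniq Ω hΩ (by
      intro e
      have : (z : G) ∈ Ω := ⟨z.2, by rw [← hz, ← Subgroup.orderOf_coe]; exact pow_orderOf_eq_one _⟩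
      rw [e, Subgroup.mem_bot] at this
      have h3 : z = 1 := Subtype.ext this
      rw [h3, orderOf_one] at hz
      exact hp.out.one_lt.ne hz)
    exact fun n hn => (hle hn).2
  have hscal : ∀ g : G, ∃ k : ℕ, ∀ n ∈ N, g * n * g⁻¹ = n ^ k := by
    intro g
    letI : CommGroup N := { (inferInstance : Group N) with
      mul_comm := fun a b => Subtype.ext (hcomm a a.2 b b.2) }
    let f : N →* N := (MulAut.conjNormal (H := N) g).toMonoidHom
    have hf : ∀ (j : ℕ) (x : N), ((f^[j] x : N) : G) = g ^ j * x * (g ^ j)⁻¹ := by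
      intro j
      induction j with
      | zero => intro x; simp
      | succ j ih =>
        intro x
        rw [Function.iterate_succ_apply, ih]
        change g ^ j * (g * x * g⁻¹) * (g ^ j)⁻¹ = _
        rw [pow_succ]; group
    obtain ⟨k, v, hv, hfv⟩ := eig_group (fun x : N => Subtype.ext (hexp x x.2)) f (by
      intro x
      apply Subtype.ext
      rw [hf]
      change _ = g * x * g⁻¹
      have : g ^ p = g * g ^ (p - 1) := by
        rw [← pow_succ', Nat.sub_add_cancel hp.out.pos]
      rw [this]
      calc _ = g * (g ^ (p - 1) * x * (g ^ (p - 1))⁻¹) * g⁻¹ := by group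
        _ = _ := by rw [hcent _ (h2 g) x x.2])
    have hfv' : g * v * g⁻¹ = (v : G) ^ k := congrArg Subtype.val hfv
    let E : Subgroup G :=
      { carrier := {n | n ∈ N ∧ g * n * g⁻¹ = n ^ k}
        one_mem' := ⟨N.one_mem, by simp⟩
        mul_mem' := by
          rintro a b ⟨ha, ha'⟩ ⟨hb, hb'⟩
          refine ⟨N.mul_mem ha hb, ?_⟩
          rw [(show Commute a b from hcomm a ha b hb).mul_pow, ← ha', ← hb']; group
        inv_mem' := by
          rintro a ⟨ha, ha'⟩
          exact ⟨N.inv_mem ha, by rw [inv_pow, ← ha']; group⟩ }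
    have hE : E.Normal := ⟨fun n hn y => ⟨hNn.conj_mem n hn.1 y, by
      have hm := hNn.conj_mem _ (hNn.conj_mem n hn.1 g) y
      have e1 := hcent _ (h1 g y) _ hm
      rw [conj_pow, ← hn.2, ← e1]
      group⟩⟩
    have hle := huniq E hE (by
      intro e
      have : (v : G) ∈ E := ⟨v.2, hfv'⟩
      rw [e, Subgroup.mem_bot] at this
      exact hv (Subtype.ext this))
    exact ⟨k, fun n hn => (hle hn).2⟩
  apply ha (Subgroup.zpowers (z : G)) ⟨fun n hn g => ?_⟩
  · rw [Nat.card_zpowers, Subgroup.orderOf_coe, hz]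
    exact hp.out
  · obtain ⟨k, hk⟩ := hscal g
    rw [hk n ((Subgroup.zpowers_le.2 z.2) hn)]
    exact Subgroup.pow_mem _ hn k

theorem core [Finite G] [Nontrivial G] (ha : ∀ Z : Subgroup G, Z.Normal → ¬ (Nat.card Z).Prime)
    (hb : ∀ K : Subgroup G, K.Normal → K ≠ ⊥ → K ≠ ⊤ →
      ∃ M : Subgroup G, M.Normal ∧ K < M ∧ (K.relIndex M).Prime)
    (hc : Good G) : False := by
  obtain ⟨N, hNn, hN0, -, hmin⟩ :=
    exists_min_normal (G := G) (X := ⊤) inferInstance bot_lt_top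
  have huniq : ∀ K : Subgroup G, K.Normal → K ≠ ⊥ → N ≤ K := by
    intro K hK hK0
    by_contra hNK
    have := chief_prime hb ⊥ N K inferInstance hNn hK hN0 hmin bot_le hK0 hNK
    rw [Subgroup.relIndex_bot_left] at this
    exact ha N hNn this
  obtain ⟨p, hp, hNp⟩ := step1 ha hc N hNn hN0.ne' huniq
  have := Fact.mk hp
  obtain ⟨P, hP⟩ := step2 ha hc N hNn hN0.ne' huniq p hNp
  obtain ⟨O, hO, hOp, hNO, h1, h2⟩ := step3 hb N hNn hN0.ne' huniq p hNp P hP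
  exact step4 ha N hNn hN0.ne' huniq p hNp O hO hOp hNO h1 h2

end UsProof

namespace UsProof

variable {G : Type*} [Group G]

lemma comap_map_mk {C L : Subgroup G} [C.Normal] (h : C ≤ L) :
    (L.map (QuotientGroup.mk' C)).comap (QuotientGroup.mk' C) = L := by
  rw [Subgroup.comap_map_eq, QuotientGroup.ker_mk', sup_eq_left.2 h]

lemma map_comap_mk {C : Subgroup G} [C.Normal] (K : Subgroup (G ⧸ C)) :
    (K.comap (QuotientGroup.mk' C)).map (QuotientGroup.mk' C) = K :=
  Subgroup.map_comap_eq_self_of_surjective (QuotientGroup.mk'_surjective C) K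

lemma uhyper [Finite G] (C L : Subgroup G) [C.Normal] (hLn : L.Normal) (hCL : C ≤ L)
    (hL : ∀ M : Subgroup G, M.Normal → L < M → ¬ (L.relIndex M).Prime) (x : G)
    (hx : (QuotientGroup.mk x : G ⧸ C) ∈ UHypercenter (G ⧸ C)) : x ∈ L := by
  have hcm := comap_map_mk hCL
  have hL'n : (L.map (QuotientGroup.mk' C)).Normal :=
    hLn.map _ (QuotientGroup.mk'_surjective C)
  generalize hL' : L.map (QuotientGroup.mk' C) = L' at hcm hL'n
  have hle : UHypercenter (G ⧸ C) ≤ L' := by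
    refine sSup_le ?_
    rintro N ⟨hN, hch⟩
    by_contra hNL
    have hlt : L' ⊓ N < N := lt_of_le_of_ne inf_le_right fun e => hNL (e ▸ inf_le_left)
    obtain ⟨A, hAn, hDA, hAN, hmin⟩ := exists_min_normal hN hlt
    have hpr := hch A (L' ⊓ N) ⟨hAn, inferInstance, hDA, fun K hK h1 h2 =>
      h1.ne' (hmin K hK h1.le h2)⟩ hAN
    have e1 : (L' ⊓ N) ⊓ A = L' ⊓ A := by rw [inf_assoc, inf_eq_right.2 hAN]
    rw [← Subgroup.inf_relIndex_right, e1, Subgroup.inf_relIndex_right,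
      ← Subgroup.relIndex_sup_right] at hpr
    refine hL ((A ⊔ L').comap (QuotientGroup.mk' C)) inferInstance (lt_of_le_of_ne ?_ ?_) ?_
    · conv_lhs => rw [← hcm]
      exact Subgroup.comap_mono le_sup_right
    · intro e
      have : A ⊔ L' = L' := by
        rw [← map_comap_mk (A ⊔ L'), ← e, hL']
      rw [this, Subgroup.relIndex_self] at hpr
      exact Nat.not_prime_one hpr
    · rw [← hcm, Subgroup.relIndex_comap, map_comap_mk]
      exact hpr
  have := hle hx
  rw [← hcm]
  exact this

lemma sylow_of_isSylowIn [Finite G] {q : ℕ} [Fact q.Prime] {Q E : Subgroup G}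
    (h : IsSylowIn q Q E) (hE : ¬ q ∣ E.index) : ∃ S : Sylow q G, (S : Subgroup G) = Q := by
  refine ⟨h.2.1.toSylow ?_, rfl⟩
  intro hd
  rw [← Subgroup.relIndex_mul_index h.1] at hd
  rcases (Fact.out : q.Prime).dvd_mul.1 hd with h1 | h1
  · exact h.2.2 h1
  · exact hE h1

lemma sperm_map [Finite G] {H : Subgroup G} (hH : SPermutable H) (L : Subgroup G) [L.Normal] :
    SPermutable (H.map (QuotientGroup.mk' L)) := by
  intro q hq Q hQ
  have := Fact.mk hq
  obtain ⟨S, rfl⟩ := sylow_of_isSylowIn hQ (by simpa using hq.one_lt.ne')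
  obtain ⟨R, rfl⟩ := Sylow.mapSurjective_surjective (QuotientGroup.mk'_surjective L) q S
  have := hH q hq R (sylow_isSylowIn R)
  rw [Sylow.coe_mapSurjective, Subgroup.coe_map, Subgroup.coe_map, ← Set.image_mul, ← Set.image_mul,
    this]

lemma good_quot [Finite G] (L : Subgroup G) [hLn : L.Normal]
    (hL : ∀ M : Subgroup G, M.Normal → L < M → ¬ (L.relIndex M).Prime)
    (h : ∀ p : ℕ, p.Prime → ∃ P : Sylow p G, IsCyclic (P : Subgroup G) ∨
      ∀ M : Subgroup G, IsMaximalIn M P → UsQuasinormal M) : Good (G ⧸ L) := by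
  intro p hp
  have := Fact.mk hp
  obtain ⟨P, hP⟩ := h p hp
  have hsurj := QuotientGroup.mk'_surjective L
  refine ⟨P.mapSurjective hsurj, ?_⟩
  rw [Sylow.coe_mapSurjective]
  rcases hP with hP | hP
  · left
    exact isCyclic_of_surjective ((QuotientGroup.mk' L).subgroupMap P)
      ((QuotientGroup.mk' L).subgroupMap_surjective P)
  right
  intro M' hM' hcore
  have hmap : ((P : Subgroup G) ⊓ M'.comap (QuotientGroup.mk' L)).map (QuotientGroup.mk' L) = M' := by
    apply le_antisymm
    · rintro _ ⟨x, hx, rfl⟩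
      exact hx.2
    · intro y hy
      obtain ⟨x, hx, rfl⟩ := hM'.1.le hy
      exact ⟨x, ⟨hx, hy⟩, rfl⟩
  have hPL : ∀ x ∈ P, x ∈ L → x ∈ (P : Subgroup G) ⊓ M'.comap (QuotientGroup.mk' L) := by
    intro x hx hxL
    refine ⟨hx, ?_⟩
    have : QuotientGroup.mk' L x = 1 := (QuotientGroup.eq_one_iff x).2 hxL
    change QuotientGroup.mk' L x ∈ M'
    rw [this]; exact M'.one_mem
  have hmax : IsMaximalIn ((P : Subgroup G) ⊓ M'.comap (QuotientGroup.mk' L)) P := by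
    refine ⟨lt_of_le_of_ne inf_le_left ?_, ?_⟩
    · intro e
      rw [e] at hmap
      exact hM'.1.ne hmap.symm
    · intro K hK hKP
      have hle : M' ≤ K.map (QuotientGroup.mk' L) := by
        rw [← hmap]; exact Subgroup.map_mono hK.le
      have hKm : K.map (QuotientGroup.mk' L) = (P : Subgroup G).map (QuotientGroup.mk' L) := by
        refine hM'.2 _ (lt_of_le_of_ne hle ?_) (Subgroup.map_mono hKP)
        intro e
        refine not_le_of_gt hK (le_inf hKP ?_)
        rw [e]
        exact Subgroup.le_comap_map _ _
      refine le_antisymm hKP fun x hx => ?_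
      have : QuotientGroup.mk' L x ∈ K.map (QuotientGroup.mk' L) := by
        rw [hKm]; exact ⟨x, hx, rfl⟩
      obtain ⟨k, hk, hkx⟩ := this
      have hkL : k⁻¹ * x ∈ L := QuotientGroup.eq.1 hkx
      have := hK.le (hPL _ (P.mul_mem (P.inv_mem (hKP hk)) hx) hkL)
      simpa using K.mul_mem hk this
  generalize (P : Subgroup G) ⊓ M'.comap (QuotientGroup.mk' L) = M at hmap hPL hmax
  obtain ⟨T, hT, hs, hint⟩ := hP M hmax
  refine ⟨T.map (QuotientGroup.mk' L), hT.map _ hsurj, ?_, ?_⟩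
  · rw [← hmap, ← Subgroup.map_sup]
    exact sperm_map hs L
  have hcoreL : M.normalCore ≤ L := by
    have h1 : (M.normalCore.map (QuotientGroup.mk' L)) ≤ M'.normalCore := by
      have : (M.normalCore.map (QuotientGroup.mk' L)).Normal :=
        (Subgroup.normalCore_normal M).map _ hsurj
      rw [Subgroup.normal_le_normalCore, ← hmap]
      exact Subgroup.map_mono (Subgroup.normalCore_le M)
    rw [hcore, le_bot_iff, Subgroup.map_eq_bot_iff, QuotientGroup.ker_mk'] at h1
    exact h1
  -- the intersection
  have hPT : (P : Subgroup G).map (QuotientGroup.mk' L) ⊓ T.map (QuotientGroup.mk' L) ≤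
      ((P : Subgroup G) ⊓ T).map (QuotientGroup.mk' L) := by
    rw [← Subgroup.relIndex_eq_one]
    have hpg : IsPGroup p ((P : Subgroup G).map (QuotientGroup.mk' L) ⊓
        T.map (QuotientGroup.mk' L) : Subgroup (G ⧸ L)) := (P.2.map _).to_le inf_le_left
    obtain ⟨n, hn⟩ := IsPGroup.iff_card.1 hpg
    have hd1 : (((P : Subgroup G) ⊓ T).map (QuotientGroup.mk' L)).relIndex
        ((P : Subgroup G).map (QuotientGroup.mk' L) ⊓ T.map (QuotientGroup.mk' L)) ∣ p ^ n := by
      rw [← hn]; exact Subgroup.relIndex_dvd_card _ _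
    have hd2 : (((P : Subgroup G) ⊓ T).map (QuotientGroup.mk' L)).relIndex
        ((P : Subgroup G).map (QuotientGroup.mk' L) ⊓ T.map (QuotientGroup.mk' L)) ∣
        (P : Subgroup G).relIndex T := by
      have hle : ((P : Subgroup G) ⊓ T).map (QuotientGroup.mk' L) ≤
          (P : Subgroup G).map (QuotientGroup.mk' L) ⊓ T.map (QuotientGroup.mk' L) :=
        Subgroup.map_inf_le _ _ _
      refine (Dvd.intro _ (Subgroup.relIndex_mul_relIndex _ _ _ hle inf_le_right)).trans ?_
      rw [← Subgroup.relIndex_comap, ← Subgroup.inf_relIndex_right (P : Subgroup G) T]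
      exact Subgroup.relIndex_dvd_of_le_left _ (Subgroup.le_comap_map _ _)
    obtain ⟨m, -, hm⟩ := (Nat.dvd_prime_pow hp).1 hd1
    rw [hm] at hd2 ⊢
    rcases Nat.eq_zero_or_pos m with rfl | hm0
    · simp
    · exact absurd ((dvd_pow_self p hm0.ne').trans hd2) (sylow_relIndex P T)
  rw [eq_bot_iff]
  rintro y ⟨hyM, hyT⟩
  have hyM' : y ∈ M.map (QuotientGroup.mk' L) := by rw [hmap]; exact hyM
  obtain ⟨m, hm, rfl⟩ := hyM'
  obtain ⟨t, ⟨htP, htT⟩, htm⟩ := hPT ⟨⟨m, hmax.1.le hm, rfl⟩, hyT⟩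
  have htL : t⁻¹ * m ∈ L := QuotientGroup.eq.1 htm
  have h1 := hPL _ (P.mul_mem (P.inv_mem htP) (hmax.1.le hm)) htL
  have htM : t ∈ M := by
    have := M.mul_mem hm (M.inv_mem h1)
    simpa using this
  have h2 := uhyper M.normalCore L hLn hcoreL hL t (hint t ⟨htM, htT⟩)
  rw [Subgroup.mem_bot, ← htm]
  exact (QuotientGroup.eq_one_iff t).2 h2

/-- every proper normal subgroup has a normal overgroup of prime relative index -/
def SS (G : Type*) [Group G] : Prop :=
  ∀ L : Subgroup G, L.Normal → L ≠ ⊤ →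
    ∃ M : Subgroup G, M.Normal ∧ L < M ∧ (L.relIndex M).Prime

theorem ss_of [Finite G]
    (h : ∀ p : ℕ, p.Prime → ∃ P : Sylow p G, IsCyclic (P : Subgroup G) ∨
      ∀ M : Subgroup G, IsMaximalIn M P → UsQuasinormal M) : SS G := by
  by_contra hss
  unfold SS at hss
  push Not at hss
  obtain ⟨L₀, h1, h2, h3⟩ := hss
  obtain ⟨L, ⟨hLn, hLt, hL⟩, hmax⟩ :=
    (Set.toFinite {L : Subgroup G | L.Normal ∧ L ≠ ⊤ ∧
      ∀ M : Subgroup G, M.Normal → L < M → ¬ (L.relIndex M).Prime}).exists_maximal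
      ⟨L₀, h1, h2, h3⟩
  have hnt : Nontrivial (G ⧸ L) := by
    by_contra hn
    rw [not_nontrivial_iff_subsingleton, QuotientGroup.subsingleton_iff] at hn
    exact hLt hn
  refine core (G := G ⧸ L) ?_ ?_ (good_quot L hL h)
  · intro Z hZ hZp
    have e : L.relIndex (Z.comap (QuotientGroup.mk' L)) = Nat.card Z := by
      have := Subgroup.relIndex_ker (K := Z.comap (QuotientGroup.mk' L)) (QuotientGroup.mk' L)
      rwa [QuotientGroup.ker_mk', map_comap_mk] at this
    refine hL (Z.comap (QuotientGroup.mk' L)) inferInstance (lt_of_le_of_ne ?_ ?_) (e ▸ hZp)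
    · exact QuotientGroup.le_comap_mk' L Z
    · intro e'
      rw [← e', Subgroup.relIndex_self] at e
      exact Nat.not_prime_one (e ▸ hZp)
  · intro K hK hK0 hKt
    have hLK : L < K.comap (QuotientGroup.mk' L) := by
      refine lt_of_le_of_ne (QuotientGroup.le_comap_mk' L K) fun e => hK0 ?_
      rw [← map_comap_mk K, ← e, Subgroup.map_eq_bot_iff, QuotientGroup.ker_mk']
    by_contra hcon
    push Not at hcon
    refine not_le_of_gt hLK (hmax ⟨inferInstance, ?_, ?_⟩ hLK.le)
    · intro e
      apply hKt
      rw [← map_comap_mk K, e, Subgroup.map_top_of_surjective _ (QuotientGroup.mk'_surjective L)]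
    · intro M hM hKM hpr
      rw [Subgroup.relIndex_comap] at hpr
      refine hcon (M.map (QuotientGroup.mk' L)) (hM.map _ (QuotientGroup.mk'_surjective L))
        (lt_of_le_of_ne ?_ ?_) hpr
      · rw [← map_comap_mk K]; exact Subgroup.map_mono hKM.le
      · intro e
        rw [← e, Subgroup.relIndex_self] at hpr
        exact Nat.not_prime_one hpr

lemma cyc_of_prime {K M : Subgroup G} (hKM : K < M) (hp : (K.relIndex M).Prime) (hK : K.Normal) :
    ∃ g ∈ M, ∀ x ∈ M, ∃ m : ℤ, x⁻¹ * g ^ m ∈ K := by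
  obtain ⟨g, hgM, hgK⟩ := SetLike.exists_of_lt hKM
  refine ⟨g, hgM, ?_⟩
  have hle : Subgroup.zpowers g ⊔ K ≤ M := sup_le (Subgroup.zpowers_le.2 hgM) hKM.le
  have hmul := Subgroup.relIndex_mul_relIndex K _ _ le_sup_right hle
  have hM : M ≤ Subgroup.zpowers g ⊔ K := by
    rw [← Subgroup.relIndex_eq_one]
    rcases (Nat.dvd_prime hp).1 (Dvd.intro _ hmul) with h | h
    · rw [Subgroup.relIndex_eq_one] at h
      exact absurd (h (Subgroup.mem_sup_left (Subgroup.mem_zpowers g))) hgK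
    · rw [h] at hmul
      exact Nat.eq_of_mul_eq_mul_left hp.pos (by rw [hmul, mul_one])
  intro x hx
  obtain ⟨y, ⟨m, rfl⟩, z, hz, rfl⟩ := Subgroup.mem_sup_of_normal_right.1 (hM hx)
  refine ⟨m, ?_⟩
  simpa using hz

lemma chain_of_ss [Finite G] (h : SS G) : ∀ n : ℕ, ∀ K : Subgroup G, K.Normal → K.index = n →
    ∃ (k : ℕ) (c : Fin (k + 1) → Subgroup G),
    c 0 = K ∧ c (Fin.last k) = ⊤ ∧ (∀ i, (c i).Normal) ∧
    (∀ i : Fin k, c i.castSucc ≤ c i.succ) ∧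
    ∀ i : Fin k, ∃ g ∈ c i.succ, ∀ x ∈ c i.succ, ∃ m : ℤ, x⁻¹ * g ^ m ∈ c i.castSucc := by
  intro n
  induction n using Nat.strong_induction_on with
  | _ n ih =>
    intro K hK hn
    by_cases hKt : K = ⊤
    · exact ⟨0, fun _ => K, rfl, hKt, fun _ => hK, fun i => i.elim0, fun i => i.elim0⟩
    obtain ⟨M, hM, hKM, hp⟩ := h K hK hKt
    obtain ⟨k, c, h0, hl, hc1, hc2, hc3⟩ := ih M.index (by
      rw [← hn]; exact Subgroup.index_strictAnti hKM) M hM rfl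
    refine ⟨k + 1, Fin.cons K c, rfl, ?_, ?_, ?_, ?_⟩
    · rw [← Fin.succ_last, Fin.cons_succ, hl]
    · intro i
      refine Fin.cases ?_ (fun j => ?_) i
      · exact hK
      · exact hc1 j
    · intro i
      refine Fin.cases ?_ (fun j => ?_) i
      · rw [Fin.cons_succ, h0]; exact hKM.le
      · rw [Fin.cons_succ, ← Fin.succ_castSucc, Fin.cons_succ]; exact hc2 j
    · intro i
      refine Fin.cases ?_ (fun j => ?_) i
      · rw [Fin.cons_succ, h0]; exact cyc_of_prime hKM hp hK
      · rw [Fin.cons_succ, ← Fin.succ_castSucc, Fin.cons_succ]; exact hc3 j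

lemma supersoluble_of_ss [Finite G] (h : SS G) : IsSupersoluble G :=
  chain_of_ss h _ ⊥ inferInstance rfl

lemma exists_isSylowIn [Finite G] (p : ℕ) [Fact p.Prime] (E : Subgroup G) :
    ∃ P, IsSylowIn p P E := by
  let S : Sylow p E := default
  refine ⟨(S : Subgroup E).map E.subtype, Subgroup.map_subtype_le _, S.2.map _, ?_⟩
  have : ((S : Subgroup E).map E.subtype).subgroupOf E = S :=
    Subgroup.comap_map_eq_self_of_injective E.subtype_injective _
  rw [this]
  exact S.not_dvd_index

theorem main [Finite G] (A B : Subgroup G)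
    (hAB : (A : Set G) * (B : Set G) = Set.univ)
    (hBhall : Nat.Coprime (Nat.card B) B.index)
    (hBcyc : ∀ q : ℕ, q.Prime → ∀ Q : Subgroup G, IsSylowIn q Q B → IsCyclic Q)
    (hyp : ∀ p : ℕ, p.Prime → ∀ P : Subgroup G, IsSylowIn p P A → ¬ IsCyclic P →
      ∀ M : Subgroup G, IsMaximalIn M P → UsQuasinormal M) :
    IsSupersoluble G := by
  refine supersoluble_of_ss (ss_of fun p hp => ?_)
  have := Fact.mk hp
  by_cases hpB : p ∣ Nat.card B
  · obtain ⟨Q, hQ⟩ := exists_isSylowIn p B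
    obtain ⟨S, hS⟩ := sylow_of_isSylowIn hQ fun hd =>
      Nat.not_coprime_of_dvd_of_dvd hp.one_lt hpB hd hBhall
    exact ⟨S, Or.inl (by rw [hS]; exact hBcyc p hp Q hQ)⟩
  · obtain ⟨Q, hQ⟩ := exists_isSylowIn p A
    obtain ⟨S, hS⟩ := sylow_of_isSylowIn hQ fun hd =>
      hpB (hd.trans (index_dvd_of_mul A B hAB))
    refine ⟨S, ?_⟩
    rw [hS]
    by_cases hc : IsCyclic Q
    · exact Or.inl hc
    · exact Or.inr (hyp p hp Q hQ hc)

end UsProof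

/-- If `G = AB` with `A` subnormal and `B` a supersoluble Hall subgroup
all of whose Sylow subgroups are cyclic, and every maximal subgroup of every
non-cyclic Sylow subgroup of `A` is 𝔘ₛ-quasinormal in `G`, then `G` is supersoluble. -/
theorem stmt_1 {G : Type*} [Group G] [Finite G] (A B : Subgroup G)
    (hAB : (A : Set G) * (B : Set G) = Set.univ)
    (hA : IsSubnormal A)
    (hBsupersoluble : IsSupersoluble B)
    (hBhall : Nat.Coprime (Nat.card B) B.index)
    (hBcyc : ∀ q : ℕ, q.Prime → ∀ Q : Subgroup G, IsSylowIn q Q B → IsCyclic Q)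
    (hyp : ∀ p : ℕ, p.Prime → ∀ P : Subgroup G, IsSylowIn p P A → ¬ IsCyclic P →
      ∀ M : Subgroup G, IsMaximalIn M P → UsQuasinormal M) :
    IsSupersoluble G := by
  exact UsProof.main A B hAB hBhall hBcyc hyp
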